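/- Let K, E ≥ 2 be integers, L ∈ [0,1]^{K×E} a loss matrix with rows ℓ_a, and 𝒜 a maximal subset of Pareto optimal actions containing no two duplicate actions. Let ℋ be the set of functions φ : 𝒜 → 𝒜 with φ(a) ∈ N_a for all a ∈ 𝒜. Then there exists a constant ε > 0, depending only on L, such that: for every n, every sequence u_1, …, u_n ∈ 𝒫_{E−1}, every sequence B_1, …, B_n of actions in 𝒜, and every a*_n ∈ argmin_{a∈[K]} ∑_{t=1}^n ⟨ℓ_a, u_t⟩, one has ∑_{t=1}^n ⟨ℓ_{B_t} − ℓ_{a*_n}, u_t⟩ ≤ (1/ε) · max_{φ ∈ ℋ} ∑_{t=1}^n ⟨ℓ_{B_t} − ℓ_{φ(B_t)}, u_t⟩. -/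

import Mathlib

open scoped BigOperators

/-- The probability simplex in `ℝ^E`. -/
def probSimplex (E : ℕ) : Set (Fin E → ℝ) :=
  {u | (∀ i, 0 ≤ u i ∧ u i ≤ 1) ∧ ∑ i, u i = 1}

/-- The cell of action `a`: the set of distributions on which `a` is optimal. -/
def cell {K E : ℕ} (L : Fin K → Fin E → ℝ) (a : Fin K) : Set (Fin E → ℝ) :=
  {u | u ∈ probSimplex E ∧ ∀ b, ∑ i, L a i * u i ≤ ∑ i, L b i * u i}

/-- The dimension of a set: the dimension of its affine hull. -/
noncomputable def dimSet {E : ℕ} (s : Set (Fin E → ℝ)) : ℕ :=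
  Module.finrank ℝ (affineSpan ℝ s).direction

/-- Action `a` is Pareto optimal if its cell has dimension `E - 1`. -/
def ParetoOptimal {K E : ℕ} (L : Fin K → Fin E → ℝ) (a : Fin K) : Prop :=
  (cell L a).Nonempty ∧ dimSet (cell L a) = E - 1

/-- Pareto optimal actions `a` and `b` are neighbors if `C_a ∩ C_b` has dimension `E - 2`. -/
def Neighbors {K E : ℕ} (L : Fin K → Fin E → ℝ) (a b : Fin K) : Prop :=
  ParetoOptimal L a ∧ ParetoOptimal L b ∧
    (cell L a ∩ cell L b).Nonempty ∧ dimSet (cell L a ∩ cell L b) = E - 2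
/-- `b` belongs to the neighborhood `N_a`: either `b = a`, or `b` is a neighbor of `a`
that is not a duplicate of `a`. -/
def InNbhd {K E : ℕ} (L : Fin K → Fin E → ℝ) (a b : Fin K) : Prop :=
  b = a ∨ (Neighbors L a b ∧ L b ≠ L a)

/-!
Grouping the rounds by the action played and adding up the distributions in each group reduces the
theorem to one action `a` and one nonnegative vector `v`: the regret of `a` at `v` against any
action must be at most a constant times its regret against the best action of its neighbourhood.

The nonnegative vectors on which `a` is optimal form a cone with nonempty interior. Among the
constraints `⟨ℓ_a, v⟩ ≤ ⟨ℓ_b, v⟩`, `b ∈ 𝒜`, which cut out this cone, keep an irredundant family;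
each remaining `b` defines a facet, hence is a neighbour of `a`. If `M` is the largest violation
of these constraints at `v`, then adding `M` times a fixed, suitably scaled interior point of the
cone to `v` repairs all of them and makes `a` optimal, so the regret of `a` at `v` is `O(M)`.
-/

open Filter Topology

section TopologicalVectorSpace

variable {V : Type*} [AddCommGroup V] [Module ℝ V] [TopologicalSpace V] [ContinuousAdd V]
  [ContinuousSMul ℝ V] {s : Set V} {x : V}

theorem exists_pos_add_smul_mem_of_mem_interior (hx : x ∈ interior s) (d : V) :
    ∃ r > (0 : ℝ), x + r • d ∈ s := by
  have hcont : Tendsto (fun r : ℝ => x + r • d) (𝓝 0) (𝓝 x) := by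
    have : Continuous fun r : ℝ => x + r • d := by fun_prop
    simpa using this.tendsto 0
  have hmem : ∀ᶠ r : ℝ in 𝓝[>] 0, x + r • d ∈ s :=
    nhdsWithin_le_nhds (hcont (mem_interior_iff_mem_nhds.1 hx))
  exact (eventually_mem_nhdsWithin.and hmem).exists

theorem span_inter_eq_of_mem_interior {M : Submodule ℝ V} (hx : x ∈ interior s) (hxM : x ∈ M) :
    Submodule.span ℝ (s ∩ M) = M := by
  refine (Submodule.span_le.2 Set.inter_subset_right).antisymm fun d hd => ?_
  obtain ⟨r, hr, hrs⟩ := exists_pos_add_smul_mem_of_mem_interior hx d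
  have hxS : x ∈ Submodule.span ℝ (s ∩ M) := Submodule.subset_span ⟨interior_subset hx, hxM⟩
  have hyS : x + r • d ∈ Submodule.span ℝ (s ∩ M) :=
    Submodule.subset_span ⟨hrs, M.add_mem hxM (M.smul_mem r hd)⟩
  exact (Submodule.smul_mem_iff _ hr.ne').1 ((Submodule.add_mem_iff_right _ hxS).1 hyS)

end TopologicalVectorSpace

theorem convexCone_interior_nonempty_iff_span_eq_top {V : Type*} [NormedAddCommGroup V]
    [NormedSpace ℝ V] [FiniteDimensional ℝ V] {T : ConvexCone ℝ V} (hT : T.Pointed) :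
    (interior (T : Set V)).Nonempty ↔ Submodule.span ℝ (T : Set V) = ⊤ := by
  rw [T.convex.interior_nonempty_iff_affineSpan_eq_top, ← Set.insert_eq_of_mem hT,
    ← SetLike.coe_set_eq, affineSpan_insert_zero, Submodule.span_insert_zero,
    AffineSubspace.top_coe, ← Submodule.top_coe (R := ℝ), SetLike.coe_set_eq]

theorem exists_mem_openSegment_map_eq_zero {𝕜 V : Type*} [Field 𝕜] [LinearOrder 𝕜]
    [IsStrictOrderedRing 𝕜] [AddCommGroup V] [Module 𝕜 V] (f : Module.Dual 𝕜 V) {x y : V}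
    (hx : 0 < f x) (hy : f y < 0) : ∃ z ∈ openSegment 𝕜 x y, f z = 0 := by
  have h := image_openSegment 𝕜 f.toAffineMap x y
  rw [LinearMap.coe_toAffineMap, openSegment_symm 𝕜 (f x), openSegment_eq_Ioo (hy.trans hx)] at h
  exact h.ge ⟨hy, hx⟩

theorem finrank_vectorSpan_add_one_of_map_eq_one {k V : Type*} [Field k] [AddCommGroup V]
    [Module k V] [FiniteDimensional k V] (f : Module.Dual k V) {s : Set V} (hs : s.Nonempty)
    (hf : ∀ x ∈ s, f x = 1) :
    Module.finrank k (vectorSpan k s) + 1 = Module.finrank k (Submodule.span k s) := by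
  obtain ⟨x, hx⟩ := hs
  have hker : vectorSpan k s ≤ f.ker := by
    rw [vectorSpan_def, Submodule.span_le]
    rintro _ ⟨y, hy, z, hz, rfl⟩
    simp [hf y hy, hf z hz]
  have hxs : x ∉ vectorSpan k s := fun h => by simpa [hf x hx] using hker h
  suffices h : vectorSpan k s ⊔ Submodule.span k {x} = Submodule.span k s by
    rw [← h, Submodule.finrank_sup_span_singleton hxs]
  apply le_antisymm
  · rw [sup_le_iff, vectorSpan_def, Submodule.span_le, Submodule.span_singleton_le_iff_mem]
    refine ⟨?_, Submodule.subset_span hx⟩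
    rintro _ ⟨y, hy, z, hz, rfl⟩
    exact Submodule.sub_mem _ (Submodule.subset_span hy) (Submodule.subset_span hz)
  · refine Submodule.span_le.2 fun y hy => ?_
    rw [← sub_add_cancel y x]
    exact Submodule.add_mem_sup (vsub_mem_vectorSpan k hy hx) (Submodule.mem_span_singleton_self x)

theorem finrank_ker_dotProduct_add_one {k ι : Type*} [Field k] [Fintype ι] [DecidableEq ι]
    {g : ι → k} (hg : g ≠ 0) :
    Module.finrank k (dotProductEquiv k ι g).ker + 1 = Fintype.card ι := by
  rw [Module.Dual.finrank_ker_add_one_of_ne_zero ((dotProductEquiv k ι).map_ne_zero_iff.2 hg),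
    Module.finrank_fintype_fun_eq_card]

theorem closure_interior_Ici_pi {ι : Type*} [Finite ι] (x : ι → ℝ) :
    closure (interior (Set.Ici x)) = Set.Ici x := by
  rw [(convex_Ici (𝕜 := ℝ) x).closure_interior_eq_closure_of_nonempty_interior, closure_Ici]
  rw [← Set.pi_univ_Ici, interior_pi_set Set.finite_univ]
  exact ⟨x + 1, fun i _ => by simp⟩

section Euclidean

variable {ι : Type*} [Fintype ι]

theorem dotProduct_pos_of_mem_interior {s : Set (ι → ℝ)} {g w : ι → ℝ} (hg : g ≠ 0)
    (hs : ∀ v ∈ s, 0 ≤ g ⬝ᵥ v) (hw : w ∈ interior s) : 0 < g ⬝ᵥ w := by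
  obtain ⟨r, hr, hmem⟩ := exists_pos_add_smul_mem_of_mem_interior hw (-g)
  have hgg : 0 < g ⬝ᵥ g := by simpa using Matrix.dotProduct_self_star_pos_iff.2 hg
  have := hs _ hmem
  rw [dotProduct_add, dotProduct_smul, dotProduct_neg, smul_eq_mul] at this
  linarith [mul_pos hr hgg]

theorem span_inter_stdSimplex {T : ConvexCone ℝ (ι → ℝ)} (hT : ∀ v ∈ T, 0 ≤ v) :
    Submodule.span ℝ (T ∩ stdSimplex ℝ ι : Set (ι → ℝ)) = Submodule.span ℝ (T : Set (ι → ℝ)) := by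
  refine (Submodule.span_mono Set.inter_subset_left).antisymm (Submodule.span_le.2 fun v hv => ?_)
  obtain rfl | hne := eq_or_ne v 0
  · exact Submodule.zero_mem _
  have hpos : 0 < ∑ i, v i := by
    obtain ⟨i, hi⟩ := Function.ne_iff.1 hne
    exact Finset.sum_pos' (fun i _ => hT v hv i) ⟨i, Finset.mem_univ i, (hT v hv i).lt_of_ne' hi⟩
  have hmem : (∑ i, v i)⁻¹ • v ∈ (T ∩ stdSimplex ℝ ι : Set (ι → ℝ)) := by
    refine ⟨T.smul_mem (inv_pos.2 hpos) hv, fun i => mul_nonneg (inv_pos.2 hpos).le (hT v hv i), ?_⟩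
    simp [← Finset.mul_sum, hpos.ne']
  exact (Submodule.smul_mem_iff _ (inv_pos.2 hpos).ne').1 (Submodule.subset_span hmem)

end Euclidean

section PreferenceCone

variable {κ ι : Type*} [Fintype ι] {L : κ → ι → ℝ} {a b : κ} {S : Set κ} {v w : ι → ℝ}

/-- The cone of nonnegative vectors, viewed as unnormalised distributions, on which action `a` does
at least as well as every action in `S`. -/
def preferenceCone (L : κ → ι → ℝ) (a : κ) (S : Set κ) : ConvexCone ℝ (ι → ℝ) where
  carrier := {v | 0 ≤ v ∧ ∀ b ∈ S, L a ⬝ᵥ v ≤ L b ⬝ᵥ v}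
  smul_mem' c hc v hv := ⟨smul_nonneg hc.le hv.1, fun b hb => by
    simpa only [dotProduct_smul] using smul_le_smul_of_nonneg_left (hv.2 b hb) hc.le⟩
  add_mem' v hv w hw := ⟨add_nonneg hv.1 hw.1, fun b hb => by
    simpa only [dotProduct_add] using add_le_add (hv.2 b hb) (hw.2 b hb)⟩

/-- The cone over the cell of `a`: the nonnegative vectors on which `a` is optimal. -/
abbrev optimalCone (L : κ → ι → ℝ) (a : κ) : ConvexCone ℝ (ι → ℝ) :=
  preferenceCone L a Set.univ

theorem mem_preferenceCone :
    v ∈ preferenceCone L a S ↔ 0 ≤ v ∧ ∀ b ∈ S, L a ⬝ᵥ v ≤ L b ⬝ᵥ v :=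
  Iff.rfl

theorem mem_optimalCone : v ∈ optimalCone L a ↔ 0 ≤ v ∧ ∀ b, L a ⬝ᵥ v ≤ L b ⬝ᵥ v := by
  simp [mem_preferenceCone]

theorem preferenceCone_pointed : (preferenceCone L a S).Pointed :=
  ⟨le_rfl, fun b _ => by simp⟩

theorem optimalCone_le_preferenceCone : optimalCone L a ≤ preferenceCone L a S :=
  fun _ hv => ⟨hv.1, fun b _ => hv.2 b (Set.mem_univ b)⟩

theorem isClosed_optimalRegion : IsClosed {v : ι → ℝ | ∀ b, L a ⬝ᵥ v ≤ L b ⬝ᵥ v} := by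
  simp only [Set.ofPred_forall]
  exact isClosed_iInter fun b => isClosed_le (by fun_prop) (by fun_prop)

theorem dotProduct_lt_of_mem_interior_optimalCone
    (hw : w ∈ interior (optimalCone L a : Set (ι → ℝ))) (hb : L b ≠ L a) :
    L a ⬝ᵥ w < L b ⬝ᵥ w := by
  rw [← sub_pos, ← sub_dotProduct]
  refine dotProduct_pos_of_mem_interior (sub_ne_zero.2 hb) (fun v hv => ?_) hw
  rw [sub_dotProduct, sub_nonneg]
  exact (mem_optimalCone.1 hv).2 b

-- By Baire, the interiors of the regions where a given action is optimal have a dense union.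
theorem exists_mem_optimalCone_interior_nonempty [Finite κ] [Nonempty κ] (hv : 0 ≤ v) :
    ∃ b, (interior (optimalCone L b : Set (ι → ℝ))).Nonempty ∧ v ∈ optimalCone L b := by
  set R : κ → Set (ι → ℝ) := fun b => {v | ∀ c, L b ⬝ᵥ v ≤ L c ⬝ᵥ v}
  have hdense : Dense (⋃ b, interior (R b)) :=
    dense_iUnion_interior_of_closed (fun _ => isClosed_optimalRegion) <|
      Set.eq_univ_of_forall fun v => Set.mem_iUnion.2 (Finite.exists_min fun b => L b ⬝ᵥ v)
  have hvcl : v ∈ closure (⋃ b, interior (Set.Ici 0) ∩ interior (R b)) := by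
    rw [← Set.inter_iUnion]
    refine closure_minimal (hdense.open_subset_closure_inter isOpen_interior) isClosed_closure ?_
    rwa [closure_interior_Ici_pi]
  rw [closure_iUnion_of_finite] at hvcl
  obtain ⟨b, hb⟩ := Set.mem_iUnion.1 hvcl
  have hcone : (optimalCone L b : Set (ι → ℝ)) = Set.Ici 0 ∩ R b :=
    Set.ext fun _ => mem_optimalCone
  rw [← interior_inter, ← hcone] at hb
  refine ⟨b, closure_nonempty_iff.1 ⟨v, hb⟩, ?_⟩
  have hclosed : IsClosed (optimalCone L b : Set (ι → ℝ)) :=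
    hcone ▸ isClosed_Ici.inter isClosed_optimalRegion
  exact hclosed.closure_interior_subset hb

theorem exists_mem_optimalCone_add_one_le [Finite κ]
    (hint : (interior (optimalCone L a : Set (ι → ℝ))).Nonempty) :
    ∃ w ∈ optimalCone L a, ∀ b, L b ≠ L a → L a ⬝ᵥ w + 1 ≤ L b ⬝ᵥ w := by
  obtain ⟨w, hw⟩ := hint
  have hscale (b : κ) : ∀ᶠ r : ℝ in atTop, L b ≠ L a → 1 ≤ r * (L b ⬝ᵥ w - L a ⬝ᵥ w) := by
    by_cases hb : L b = L a
    · simp [hb]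
    · have hpos := sub_pos.2 (dotProduct_lt_of_mem_interior_optimalCone hw hb)
      filter_upwards [(tendsto_id.atTop_mul_const hpos).eventually_ge_atTop 1] with r hr _ using hr
  obtain ⟨r, hr0, hr⟩ := ((eventually_gt_atTop 0).and (eventually_all.2 hscale)).exists
  refine ⟨r • w, (optimalCone L a).smul_mem hr0 (interior_subset hw), fun b hb => ?_⟩
  have := hr b hb
  rw [dotProduct_smul, dotProduct_smul, smul_eq_mul, smul_eq_mul]
  linarith

-- A point `w` that favours `a` over every nonduplicate by at least `1` absorbs a violation of size
-- `M`: the vector `v + M • w` satisfies the constraints of `S`, hence all of them.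
theorem eventually_regret_le_mul [Finite κ]
    (hint : (interior (optimalCone L a : Set (ι → ℝ))).Nonempty)
    (hS : preferenceCone L a S = optimalCone L a) :
    ∀ᶠ C : ℝ in atTop, ∀ v : ι → ℝ, 0 ≤ v → ∀ M : ℝ, 0 ≤ M →
      (∀ b ∈ S, (L a - L b) ⬝ᵥ v ≤ M) → ∀ c, (L a - L c) ⬝ᵥ v ≤ C * M := by
  obtain ⟨w, hw, hgap⟩ := exists_mem_optimalCone_add_one_le hint
  filter_upwards [eventually_all.2 fun c => eventually_ge_atTop ((L c - L a) ⬝ᵥ w)]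
    with C hC v hv M hM hle c
  have hmem : v + M • w ∈ optimalCone L a := by
    refine hS ▸ ⟨add_nonneg hv (smul_nonneg hM hw.1), fun b hb => ?_⟩
    obtain hdup | hdup := eq_or_ne (L b) (L a)
    · rw [hdup]
    · have hbv := hle b hb
      have hbw := mul_le_mul_of_nonneg_left (hgap b hdup) hM
      rw [sub_dotProduct] at hbv
      simp only [dotProduct_add, dotProduct_smul, smul_eq_mul]
      linarith
  have hopt := (mem_optimalCone.1 hmem).2 c
  have hcw := mul_le_mul_of_nonneg_right (hC c) hM
  simp only [dotProduct_add, dotProduct_smul, smul_eq_mul] at hopt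
  rw [sub_dotProduct] at hcw ⊢
  linarith

/-- `S` is an inclusion-minimal set of competitors whose constraints already cut out the cone over
the cell of `a`. -/
def IsIrredundant (L : κ → ι → ℝ) (a : κ) (S : Set κ) : Prop :=
  Minimal (fun S => preferenceCone L a S = optimalCone L a) S

namespace IsIrredundant

theorem mem_optimalCone (hS : IsIrredundant L a S)
    (hv : v ∈ preferenceCone L a (S \ {b})) (hb : L a ⬝ᵥ v ≤ L b ⬝ᵥ v) : v ∈ optimalCone L a := by
  refine hS.prop ▸ ⟨hv.1, fun c hc => ?_⟩
  obtain rfl | hcb := eq_or_ne c b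
  · exact hb
  · exact hv.2 c ⟨hc, hcb⟩

theorem exists_mem_preferenceCone_lt (hS : IsIrredundant L a S) (hb : b ∈ S) :
    ∃ v ∈ preferenceCone L a (S \ {b}), L b ⬝ᵥ v < L a ⬝ᵥ v := by
  by_contra! h
  exact hS.not_prop_of_lt (Set.sdiff_singleton_ssubset.2 hb)
    (le_antisymm (fun v hv => hS.mem_optimalCone hv (h v hv)) optimalCone_le_preferenceCone)

theorem ne (hS : IsIrredundant L a S) (hb : b ∈ S) : L b ≠ L a := by
  obtain ⟨v, -, hlt⟩ := hS.exists_mem_preferenceCone_lt hb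
  intro h
  exact hlt.ne (h ▸ rfl)

theorem optimalCone_inf_optimalCone [DecidableEq ι] (hS : IsIrredundant L a S) :
    ((optimalCone L a ⊓ optimalCone L b : ConvexCone ℝ (ι → ℝ)) : Set (ι → ℝ)) =
      (preferenceCone L a (S \ {b}) : Set (ι → ℝ)) ∩ (dotProductEquiv ℝ ι (L b - L a)).ker := by
  ext v
  simp only [ConvexCone.coe_inf, Set.mem_inter_iff, SetLike.mem_coe, LinearMap.mem_ker,
    dotProductEquiv_apply_apply, sub_dotProduct, sub_eq_zero]
  refine ⟨fun ⟨hva, hvb⟩ => ⟨optimalCone_le_preferenceCone hva, ?_⟩, fun ⟨hv, heq⟩ => ?_⟩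
  · exact (hvb.2 a trivial).antisymm (hva.2 b trivial)
  · have hva := hS.mem_optimalCone hv heq.ge
    exact ⟨hva, hva.1, fun c hc => heq.trans_le (hva.2 c hc)⟩

-- The segment from an interior point of the cone over the cell of `a` to a point violating only
-- the constraint of `b` crosses the hyperplane where `a` and `b` tie at an interior point of the
-- cone cut out by the other constraints.
theorem span_optimalCone_inf_optimalCone [DecidableEq ι] (hS : IsIrredundant L a S) (hb : b ∈ S)
    (hint : (interior (optimalCone L a : Set (ι → ℝ))).Nonempty) :
    Submodule.span ℝ
        ((optimalCone L a ⊓ optimalCone L b : ConvexCone ℝ (ι → ℝ)) : Set (ι → ℝ)) =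
      (dotProductEquiv ℝ ι (L b - L a)).ker := by
  obtain ⟨w, hw⟩ := hint
  obtain ⟨v, hv, hlt⟩ := hS.exists_mem_preferenceCone_lt hb
  obtain ⟨x, hx, hx0⟩ : ∃ x ∈ openSegment ℝ w v, dotProductEquiv ℝ ι (L b - L a) x = 0 := by
    apply exists_mem_openSegment_map_eq_zero <;>
      rw [dotProductEquiv_apply_apply, sub_dotProduct]
    · exact sub_pos.2 (dotProduct_lt_of_mem_interior_optimalCone hw (hS.ne hb))
    · exact sub_neg.2 hlt
  have hw' : w ∈ interior (preferenceCone L a (S \ {b}) : Set (ι → ℝ)) :=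
    interior_mono optimalCone_le_preferenceCone hw
  have hxint := (ConvexCone.convex _).openSegment_interior_self_subset_interior hw' hv hx
  rw [hS.optimalCone_inf_optimalCone]
  exact span_inter_eq_of_mem_interior hxint hx0

end IsIrredundant

end PreferenceCone

section Cells

variable {K E : ℕ} {L : Fin K → Fin E → ℝ} {a b : Fin K}

theorem probSimplex_eq_stdSimplex : probSimplex E = stdSimplex ℝ (Fin E) :=
  Set.ext fun _ => ⟨fun hu => ⟨fun i => (hu.1 i).1, hu.2⟩,
    fun hu => ⟨fun i => mem_Icc_of_mem_stdSimplex hu i, hu.2⟩⟩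

theorem cell_eq_optimalCone_inter :
    cell L a = (optimalCone L a : Set (Fin E → ℝ)) ∩ probSimplex E := by
  ext u
  rw [Set.mem_inter_iff, SetLike.mem_coe, mem_optimalCone]
  exact ⟨fun ⟨hu, ha⟩ => ⟨⟨fun i => (hu.1 i).1, ha⟩, hu⟩, fun ⟨⟨_, ha⟩, hu⟩ => ⟨hu, ha⟩⟩

theorem dimSet_inter_probSimplex_add_one {T : ConvexCone ℝ (Fin E → ℝ)} (hT : ∀ v ∈ T, 0 ≤ v)
    (hne : (T ∩ probSimplex E : Set (Fin E → ℝ)).Nonempty) :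
    dimSet (T ∩ probSimplex E : Set (Fin E → ℝ)) + 1 =
      Module.finrank ℝ (Submodule.span ℝ (T : Set (Fin E → ℝ))) := by
  rw [← span_inter_stdSimplex hT, ← probSimplex_eq_stdSimplex, dimSet, direction_affineSpan]
  refine finrank_vectorSpan_add_one_of_map_eq_one (dotProductEquiv ℝ (Fin E) 1) hne fun u hu => ?_
  rw [dotProductEquiv_apply_apply, one_dotProduct, hu.2.2]

theorem inter_probSimplex_nonempty {T : ConvexCone ℝ (Fin E → ℝ)} (hT : ∀ v ∈ T, 0 ≤ v)
    (hspan : Submodule.span ℝ (T : Set (Fin E → ℝ)) ≠ ⊥) :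
    (T ∩ probSimplex E : Set (Fin E → ℝ)).Nonempty := by
  rw [← span_inter_stdSimplex hT, ← probSimplex_eq_stdSimplex] at hspan
  exact Set.nonempty_iff_ne_empty.2 fun h => hspan (by rw [h, Submodule.span_empty])

theorem paretoOptimal_iff_interior_optimalCone_nonempty (hE : 0 < E) :
    ParetoOptimal L a ↔ (interior (optimalCone L a : Set (Fin E → ℝ))).Nonempty := by
  rw [convexCone_interior_nonempty_iff_span_eq_top preferenceCone_pointed, ParetoOptimal,
    cell_eq_optimalCone_inter]
  have hnonneg : ∀ v ∈ optimalCone L a, 0 ≤ v := fun _ hv => hv.1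
  constructor
  · rintro ⟨hne, hdim⟩
    apply Submodule.eq_top_of_finrank_eq
    rw [← dimSet_inter_probSimplex_add_one hnonneg hne, hdim, Module.finrank_fin_fun,
      Nat.sub_add_cancel hE]
  · intro hspan
    have : Nonempty (Fin E) := ⟨⟨0, hE⟩⟩
    have hne := inter_probSimplex_nonempty hnonneg (hspan ▸ top_ne_bot)
    have hdim := dimSet_inter_probSimplex_add_one hnonneg hne
    rw [hspan, finrank_top, Module.finrank_fin_fun] at hdim
    exact ⟨hne, Nat.eq_sub_of_add_eq hdim⟩

theorem neighbors_of_mem_isIrredundant {S : Set (Fin K)} (hE : 2 ≤ E) (ha : ParetoOptimal L a)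
    (hb : ParetoOptimal L b) (hS : IsIrredundant L a S) (hbS : b ∈ S) : Neighbors L a b := by
  have hint := (paretoOptimal_iff_interior_optimalCone_nonempty (by omega)).1 ha
  have hspan := hS.span_optimalCone_inf_optimalCone hbS hint
  have hker := finrank_ker_dotProduct_add_one (sub_ne_zero.2 (hS.ne hbS))
  rw [Fintype.card_fin] at hker
  have hnonneg : ∀ v ∈ optimalCone L a ⊓ optimalCone L b, 0 ≤ v := fun _ hv => hv.1.1
  have hcells : cell L a ∩ cell L b =
      ((optimalCone L a ⊓ optimalCone L b : ConvexCone ℝ (Fin E → ℝ)) : Set (Fin E → ℝ)) ∩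
        probSimplex E := by
    rw [cell_eq_optimalCone_inter, cell_eq_optimalCone_inter, ← Set.inter_inter_distrib_right,
      ConvexCone.coe_inf]
  have hne := inter_probSimplex_nonempty hnonneg <| by
    rw [hspan, Ne, ← Submodule.finrank_eq_zero]
    omega
  have hdim := dimSet_inter_probSimplex_add_one hnonneg hne
  rw [hspan] at hdim
  rw [Neighbors, hcells]
  exact ⟨ha, hb, hne, by omega⟩

theorem preferenceCone_eq_optimalCone_of_cover (hE : 0 < E) {𝒜 : Finset (Fin K)}
    (hcover : ∀ b, ParetoOptimal L b → ∃ c ∈ 𝒜, L c = L b) :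
    preferenceCone L a 𝒜 = optimalCone L a := by
  have : Nonempty (Fin K) := ⟨a⟩
  refine le_antisymm (fun v hv => ?_) optimalCone_le_preferenceCone
  obtain ⟨b, hb, hvb⟩ := exists_mem_optimalCone_interior_nonempty (L := L) hv.1
  obtain ⟨c, hc, hcb⟩ := hcover b ((paretoOptimal_iff_interior_optimalCone_nonempty hE).2 hb)
  exact ⟨hv.1, fun d _ => (hv.2 c hc).trans (hcb ▸ hvb.2 d trivial)⟩

theorem eventually_regret_le_mul_nbhd (hE : 2 ≤ E) {𝒜 : Finset (Fin K)}
    (h𝒜 : ∀ a ∈ 𝒜, ParetoOptimal L a)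
    (hcover : ∀ b, ParetoOptimal L b → ∃ c ∈ 𝒜, L c = L b) (ha : a ∈ 𝒜) :
    ∀ᶠ C : ℝ in atTop, ∀ v : Fin E → ℝ, 0 ≤ v → ∀ M : ℝ,
      (∀ b ∈ 𝒜, InNbhd L a b → (L a - L b) ⬝ᵥ v ≤ M) → ∀ c, (L a - L c) ⬝ᵥ v ≤ C * M := by
  obtain ⟨S, hS𝒜, hS : IsIrredundant L a S⟩ := exists_minimal_le_of_wellFoundedLT
    (fun S => preferenceCone L a S = optimalCone L a) (𝒜 : Set (Fin K))
    (preferenceCone_eq_optimalCone_of_cover (by omega) hcover)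
  have hnbhd : ∀ b ∈ S, InNbhd L a b := fun b hb =>
    .inr ⟨neighbors_of_mem_isIrredundant hE (h𝒜 a ha) (h𝒜 b (hS𝒜 hb)) hS hb, hS.ne hb⟩
  have hint := (paretoOptimal_iff_interior_optimalCone_nonempty (by omega)).1 (h𝒜 a ha)
  filter_upwards [eventually_regret_le_mul hint hS.prop] with C hC v hv M hM
  have hM0 : 0 ≤ M := by simpa using hM a ha (.inl rfl)
  exact hC v hv M hM0 fun b hb => hM b (hS𝒜 hb) (hnbhd b hb)

end Cells

theorem exists_mem_eq_of_card_maximal {α β : Type*} {P : α → Prop} {f : α → β} {s : Finset α}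
    (hP : ∀ a ∈ s, P a) (hinj : ∀ a ∈ s, ∀ b ∈ s, f a = f b → a = b)
    (hmax : ∀ t : Finset α, (∀ a ∈ t, P a) → (∀ a ∈ t, ∀ b ∈ t, f a = f b → a = b) →
      t.card ≤ s.card) {b : α} (hb : P b) : ∃ c ∈ s, f c = f b := by
  classical
  by_contra! hnew
  have hbs : b ∉ s := fun h => hnew b h rfl
  have hinsert : Set.InjOn f (insert b s : Finset α) := by
    rw [Finset.coe_insert, Set.injOn_insert hbs]
    exact ⟨fun a ha c hc => hinj a ha c hc, fun ⟨c, hc, hcb⟩ => hnew c hc hcb⟩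
  have hcard := hmax (insert b s) ((Finset.forall_mem_insert _ _ _).2 ⟨hb, hP⟩)
    fun a ha c hc => hinsert ha hc
  rw [Finset.card_insert_of_notMem hbs] at hcard
  omega

theorem sum_regret_eq_sum_fiberwise {τ κ ι R : Type*} [NonUnitalNonAssocRing R]
    [Fintype τ] [Fintype ι] [DecidableEq κ] (L : κ → ι → R) (u : τ → ι → R) {B : τ → κ}
    {𝒜 : Finset κ} (hB : ∀ t, B t ∈ 𝒜) (ψ : κ → κ) :
    ∑ t, (L (B t) - L (ψ (B t))) ⬝ᵥ u t =
      ∑ a ∈ 𝒜, (L a - L (ψ a)) ⬝ᵥ ∑ t with B t = a, u t := by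
  rw [← Finset.sum_fiberwise_of_maps_to fun t _ => hB t]
  refine Finset.sum_congr rfl fun a _ => ?_
  rw [dotProduct_sum]
  exact Finset.sum_congr rfl fun t ht => by rw [(Finset.mem_filter.1 ht).2]

theorem stmt3_general {K E : ℕ} (hE : 2 ≤ E) (L : Fin K → Fin E → ℝ) (𝒜 : Finset (Fin K))
    (h𝒜 : ∀ a ∈ 𝒜, ParetoOptimal L a)
    (hcover : ∀ b, ParetoOptimal L b → ∃ c ∈ 𝒜, L c = L b) :
    ∃ ε > (0 : ℝ), ∀ (n : ℕ) (u : Fin n → Fin E → ℝ), (∀ t, 0 ≤ u t) →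
      ∀ B : Fin n → Fin K, (∀ t, B t ∈ 𝒜) →
        ∃ φ : Fin K → Fin K, (∀ a ∈ 𝒜, φ a ∈ 𝒜 ∧ InNbhd L a (φ a)) ∧
          ∀ ψ : Fin K → Fin K, ∑ t, (L (B t) - L (ψ (B t))) ⬝ᵥ u t ≤
            (1 / ε) * ∑ t, (L (B t) - L (φ (B t))) ⬝ᵥ u t := by
  obtain ⟨C, hC0, hC⟩ := ((eventually_gt_atTop 0).and ((eventually_all_finset 𝒜).2 fun a ha =>
    eventually_regret_le_mul_nbhd hE h𝒜 hcover ha)).exists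
  refine ⟨1 / C, one_div_pos.2 hC0, fun n u hu B hB => ?_⟩
  let U (a : Fin K) : Fin E → ℝ := ∑ t with B t = a, u t
  have hbest : ∀ a ∈ 𝒜, ∃ m, (m ∈ 𝒜 ∧ InNbhd L a m) ∧
      ∀ b ∈ 𝒜, InNbhd L a b → (L a - L b) ⬝ᵥ U a ≤ (L a - L m) ⬝ᵥ U a := fun a ha => by
    obtain ⟨m, hm, hmax⟩ := Set.exists_max_image {b | b ∈ 𝒜 ∧ InNbhd L a b}
      (fun b => (L a - L b) ⬝ᵥ U a) (Set.toFinite _) ⟨a, ha, .inl rfl⟩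
    exact ⟨m, hm, fun b hb hab => hmax b ⟨hb, hab⟩⟩
  choose! φ hφ hφmax using hbest
  refine ⟨φ, hφ, fun ψ => ?_⟩
  rw [sum_regret_eq_sum_fiberwise L u hB ψ, sum_regret_eq_sum_fiberwise L u hB φ, one_div_one_div,
    Finset.mul_sum]
  exact Finset.sum_le_sum fun a ha =>
    hC a ha (U a) (Finset.sum_nonneg fun t _ => hu t) _ (hφmax a ha) (ψ a)

theorem stmt3 {K E : ℕ} (hK : 2 ≤ K) (hE : 2 ≤ E)
    (L : Fin K → Fin E → ℝ) (hL : ∀ a i, L a i ∈ Set.Icc (0 : ℝ) 1)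
    (𝒜 : Finset (Fin K))
    (h𝒜P : ∀ a ∈ 𝒜, ParetoOptimal L a)
    (h𝒜D : ∀ a ∈ 𝒜, ∀ b ∈ 𝒜, L a = L b → a = b)
    (h𝒜max : ∀ B : Finset (Fin K), (∀ a ∈ B, ParetoOptimal L a) →
      (∀ a ∈ B, ∀ b ∈ B, L a = L b → a = b) → B.card ≤ 𝒜.card) :
    ∃ ε > (0 : ℝ), ∀ (n : ℕ) (u : Fin n → Fin E → ℝ), (∀ t, u t ∈ probSimplex E) →
      ∀ B : Fin n → Fin K, (∀ t, B t ∈ 𝒜) →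
      ∀ astar : Fin K,
        (∀ a : Fin K, ∑ t, ∑ i, L astar i * u t i ≤ ∑ t, ∑ i, L a i * u t i) →
        ∃ φ : Fin K → Fin K,
          (∀ a ∈ 𝒜, φ a ∈ 𝒜 ∧ InNbhd L a (φ a)) ∧
          ∑ t, ∑ i, (L (B t) i - L astar i) * u t i ≤
            (1 / ε) * ∑ t, ∑ i, (L (B t) i - L (φ (B t)) i) * u t i := by
  obtain ⟨ε, hε, hregret⟩ := stmt3_general hE L 𝒜 h𝒜P
    fun _ => exists_mem_eq_of_card_maximal h𝒜P h𝒜D h𝒜max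
  refine ⟨ε, hε, fun n u hu B hB astar _ => ?_⟩
  obtain ⟨φ, hφ, hle⟩ := hregret n u (fun t i => ((hu t).1 i).1) B hB
  exact ⟨φ, hφ, hle fun _ => astar⟩
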